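/- arXiv:1804.03484 — 6 statements merged into one kernel-verified Lean document; each statement's English description precedes it below -/
import Mathlib

section
/- Let Q_{F4} ∈ ℤ[X] be the quotient of (1−X^4)·(1−X^{12})·(1−X^{16})·(1−X^{24}) by (1−X^4)^2·(1−X^8)·(1−X^{12}). Then for every natural number n that is not divisible by 4, the coefficient of X^n in Q_{F4} is 0. -/
open Polynomial

/-!
Numerator and denominator are polynomials in `X ^ m` (here `m = 4`). Extracting the coefficients at
multiples of `m` is linear over polynomials in `X ^ m`, so the part of the quotient supported on
those multiples already solves the division equation; cancelling the denominator, it is the whole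
quotient.
-/

section Expand

variable {R : Type*} [CommSemiring R] {m : ℕ}

theorem coeff_eq_zero_of_mem_range_expand (hm : m ≠ 0) {f : R[X]} (hf : f ∈ (expand R m).range)
    {n : ℕ} (hn : ¬ m ∣ n) : f.coeff n = 0 := by
  obtain ⟨g, rfl⟩ := hf
  exact (coeff_expand hm.bot_lt g n).trans (if_neg hn)

theorem mem_range_expand_of_mul_mem_range_expand (hm : m ≠ 0) {f g : R[X]}
    (hg : g ∈ (expand R m).range) (hreg : IsRightRegular g)
    (hfg : f * g ∈ (expand R m).range) : f ∈ (expand R m).range := by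
  obtain ⟨b, rfl⟩ := hg
  obtain ⟨a, ha⟩ := hfg
  have hab : contract m f * b = a :=
    calc contract m f * b
        = contract m (f * expand R m b) := (contract_mul_expand hm f b).symm
      _ = contract m (expand R m a) := congrArg (contract m) ha.symm
      _ = a := contract_expand m hm
  refine ⟨contract m f, hreg ?_⟩
  calc expand R m (contract m f) * expand R m b
      = expand R m a := by rw [← map_mul, hab]
    _ = f * expand R m b := ha

end Expand

section OneSubXPow

theorem isRegular_one_sub_X_pow {R : Type*} [Ring R] {k : ℕ} (hk : k ≠ 0) :
    IsRegular (1 - X ^ k : R[X]) := by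
  have hmonic : (X ^ k - 1 : R[X]).Monic := by simpa using monic_X_pow_sub_C (1 : R) hk
  simpa using (isUnit_one.neg.isRegular).mul hmonic.isRegular

variable {R : Type*} [CommRing R]

theorem isRegular_prod_one_sub_X_pow {s : Multiset ℕ} (hs : 0 ∉ s) :
    IsRegular (s.map fun k ↦ (1 - X ^ k : R[X])).prod := by
  refine Multiset.prod_induction IsRegular _ (fun _ _ ↦ IsRegular.mul) isRegular_one ?_
  exact Multiset.forall_mem_map_iff.mpr fun k hk ↦
    isRegular_one_sub_X_pow (ne_of_mem_of_not_mem hk hs)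

theorem prod_one_sub_X_pow_mem_range_expand {m : ℕ} {s : Multiset ℕ} (hs : ∀ k ∈ s, m ∣ k) :
    (s.map fun k ↦ (1 - X ^ k : R[X])).prod ∈ (expand R m).range := by
  refine multiset_prod_mem _ (Multiset.forall_mem_map_iff.mpr fun k hk ↦ ?_)
  obtain ⟨j, rfl⟩ := hs k hk
  exact ⟨1 - X ^ j, by simp [pow_mul]⟩

theorem stmt2_general {m : ℕ} (hm : m ≠ 0) {s t : Multiset ℕ} (hs : ∀ k ∈ s, m ∣ k)
    (ht : ∀ k ∈ t, m ∣ k) (ht₀ : 0 ∉ t) {Q : R[X]}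
    (hQ : (s.map fun k ↦ (1 - X ^ k : R[X])).prod = (t.map fun k ↦ (1 - X ^ k)).prod * Q)
    {n : ℕ} (hn : ¬ m ∣ n) : Q.coeff n = 0 := by
  have hmul : Q * (t.map fun k ↦ (1 - X ^ k : R[X])).prod ∈ (expand R m).range := by
    rw [mul_comm, ← hQ]
    exact prod_one_sub_X_pow_mem_range_expand hs
  have hQ_range : Q ∈ (expand R m).range :=
    mem_range_expand_of_mul_mem_range_expand hm (prod_one_sub_X_pow_mem_range_expand ht)
      (isRegular_prod_one_sub_X_pow ht₀).right hmul
  exact coeff_eq_zero_of_mem_range_expand hm hQ_range hn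

end OneSubXPow

theorem stmt2 (Q : ℤ[X])
    (hQ : ((1 - X ^ 4) * (1 - X ^ 12) * (1 - X ^ 16) * (1 - X ^ 24) : ℤ[X]) =
      (1 - X ^ 4) ^ 2 * (1 - X ^ 8) * (1 - X ^ 12) * Q) :
    ∀ n : ℕ, ¬ (4 ∣ n) → Q.coeff n = 0 := fun _ ↦
  stmt2_general four_ne_zero (s := {4, 12, 16, 24}) (t := {4, 4, 8, 12}) (by decide) (by decide)
    (by decide) (by simpa [sq, mul_assoc] using hQ)
end

section
/- In ℤ[X], the polynomial D = (1−X^4)·(1−X^6)·(1−X^8)·(1−X^{10})·(1−X^{12})·(1−X^{14})·(1−X^{16}) divides N = (1−X^4)·(1−X^{12})·(1−X^{16})·(1−X^{20})·(1−X^{24})·(1−X^{28})·(1−X^{36}); moreover the quotient Q = N/D has degree 70, constant coefficient 1, and all of its coefficients are nonnegative. -/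
open Polynomial

/-!
When `d ∣ e`, the quotient of `1 - X ^ e` by `1 - X ^ d` is a geometric sum in `X ^ d`. Pairing each
exponent of the denominator with a multiple of it in the numerator thus writes `Q` as a product of
geometric sums, which has nonnegative coefficients; the degree and the constant coefficient of `Q`
are read off from `N = D * Q` by multiplicativity.
-/

section Nonneg

variable {R : Type*} [Semiring R] [PartialOrder R] [IsOrderedRing R]

theorem coeff_mul_nonneg {p q : R[X]} (hp : ∀ n, 0 ≤ p.coeff n) (hq : ∀ n, 0 ≤ q.coeff n)
    (n : ℕ) : 0 ≤ (p * q).coeff n := by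
  rw [coeff_mul]
  exact Finset.sum_nonneg fun _ _ => mul_nonneg (hp _) (hq _)

theorem coeff_X_pow_nonneg (k n : ℕ) : 0 ≤ (X ^ k : R[X]).coeff n := by
  rw [coeff_X_pow]
  split_ifs
  exacts [zero_le_one, le_rfl]

theorem coeff_geom_sum_X_pow_nonneg (d m n : ℕ) :
    0 ≤ (∑ k ∈ Finset.range m, (X ^ d : R[X]) ^ k).coeff n := by
  simp only [finsetSum_coeff, ← pow_mul]
  exact Finset.sum_nonneg fun _ _ => coeff_X_pow_nonneg _ _

end Nonneg

theorem coeff_prod_nonneg {ι R : Type*} [CommSemiring R] [PartialOrder R] [IsOrderedRing R]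
    {s : Finset ι} {f : ι → R[X]} (hf : ∀ i ∈ s, ∀ n, 0 ≤ (f i).coeff n) :
    ∀ n, 0 ≤ (∏ i ∈ s, f i).coeff n :=
  Finset.prod_induction f (fun p => ∀ n, 0 ≤ p.coeff n) (fun _ _ => coeff_mul_nonneg)
    (by simpa only [pow_zero] using coeff_X_pow_nonneg (R := R) 0) hf

section OneSubXPow

variable {ι κ R : Type*} [CommRing R]

theorem coeff_zero_prod_one_sub_X_pow {s : Finset ι} {d : ι → ℕ} (hd : ∀ i ∈ s, d i ≠ 0) :
    (∏ i ∈ s, (1 - X ^ d i : R[X])).coeff 0 = 1 := by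
  rw [coeff_zero_prod]
  exact Finset.prod_eq_one fun i hi => by simp [coeff_X_pow, (hd i hi).symm]

theorem natDegree_one_sub_X_pow [Nontrivial R] (k : ℕ) : (1 - X ^ k : R[X]).natDegree = k := by
  rw [natDegree_sub, ← C_1, natDegree_X_pow_sub_C]

theorem prod_one_sub_X_pow_ne_zero [Nontrivial R] {s : Finset ι} {d : ι → ℕ}
    (hd : ∀ i ∈ s, d i ≠ 0) : ∏ i ∈ s, (1 - X ^ d i : R[X]) ≠ 0 := fun h => by
  simpa [h] using coeff_zero_prod_one_sub_X_pow (R := R) hd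

theorem natDegree_prod_one_sub_X_pow [IsDomain R] {s : Finset ι} {d : ι → ℕ}
    (hd : ∀ i ∈ s, d i ≠ 0) : (∏ i ∈ s, (1 - X ^ d i : R[X])).natDegree = ∑ i ∈ s, d i := by
  rw [natDegree_prod _ _ (Finset.prod_ne_zero_iff.1 (prod_one_sub_X_pow_ne_zero hd))]
  simp only [natDegree_one_sub_X_pow]

theorem prod_one_sub_X_pow_eq_mul_prod_geom_sum [Fintype ι] [Fintype κ] {d : ι → ℕ} {e : κ → ℕ}
    (σ : ι ≃ κ) (hσ : ∀ i, d i ∣ e (σ i)) :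
    ∏ j, (1 - X ^ e j : R[X]) =
      (∏ i, (1 - X ^ d i)) * ∏ i, ∑ k ∈ Finset.range (e (σ i) / d i), (X ^ d i) ^ k := by
  rw [← σ.prod_comp, ← Finset.prod_mul_distrib]
  refine Finset.prod_congr rfl fun i _ => ?_
  rw [mul_neg_geom_sum, ← pow_mul, Nat.mul_div_cancel' (hσ i)]

end OneSubXPow

theorem stmt4_general {ι κ R : Type*} [Fintype ι] [Fintype κ] [CommRing R] [IsDomain R]
    [PartialOrder R] [IsOrderedRing R] {d : ι → ℕ} {e : κ → ℕ} (he : ∀ j, e j ≠ 0)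
    (σ : ι ≃ κ) (hσ : ∀ i, d i ∣ e (σ i)) :
    ((∏ i, (1 - X ^ d i) : R[X]) ∣ ∏ j, (1 - X ^ e j)) ∧
      ∀ Q : R[X], ∏ j, (1 - X ^ e j) = (∏ i, (1 - X ^ d i)) * Q →
        Q.natDegree + ∑ i, d i = ∑ j, e j ∧ Q.coeff 0 = 1 ∧ ∀ n, 0 ≤ Q.coeff n := by
  have factorization := prod_one_sub_X_pow_eq_mul_prod_geom_sum (R := R) σ hσ
  refine ⟨⟨_, factorization⟩, fun Q hQ => ?_⟩
  have hd : ∀ i ∈ Finset.univ, d i ≠ 0 := fun i _ => ne_zero_of_dvd_ne_zero (he _) (hσ i)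
  have he' : ∀ j ∈ Finset.univ, e j ≠ 0 := fun j _ => he j
  have hD := prod_one_sub_X_pow_ne_zero (R := R) hd
  have hQ0 : Q ≠ 0 := right_ne_zero_of_mul (hQ ▸ prod_one_sub_X_pow_ne_zero he')
  refine ⟨?natDegree, ?constantCoeff, ?nonneg⟩
  case natDegree =>
    rw [← natDegree_prod_one_sub_X_pow (R := R) hd, add_comm, ← natDegree_mul hD hQ0, ← hQ,
      natDegree_prod_one_sub_X_pow he']
  case constantCoeff =>
    simpa only [mul_coeff_zero, coeff_zero_prod_one_sub_X_pow hd,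
      coeff_zero_prod_one_sub_X_pow he', one_mul] using (congrArg (coeff · 0) hQ).symm
  case nonneg =>
    rw [mul_left_cancel₀ hD (hQ.symm.trans factorization)]
    exact coeff_prod_nonneg fun i _ => coeff_geom_sum_X_pow_nonneg _ _

theorem stmt4 :
    (((1 - X ^ 4) * (1 - X ^ 6) * (1 - X ^ 8) * (1 - X ^ 10) * (1 - X ^ 12) *
          (1 - X ^ 14) * (1 - X ^ 16) : ℤ[X]) ∣
        (1 - X ^ 4) * (1 - X ^ 12) * (1 - X ^ 16) * (1 - X ^ 20) * (1 - X ^ 24) *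
          (1 - X ^ 28) * (1 - X ^ 36)) ∧
    ∀ Q : ℤ[X],
      ((1 - X ^ 4) * (1 - X ^ 12) * (1 - X ^ 16) * (1 - X ^ 20) * (1 - X ^ 24) *
            (1 - X ^ 28) * (1 - X ^ 36) : ℤ[X]) =
          (1 - X ^ 4) * (1 - X ^ 6) * (1 - X ^ 8) * (1 - X ^ 10) * (1 - X ^ 12) *
            (1 - X ^ 14) * (1 - X ^ 16) * Q →
        Q.natDegree = 70 ∧ Q.coeff 0 = 1 ∧ ∀ n : ℕ, 0 ≤ Q.coeff n := by
  -- The permutation `c[1, 6, 2, 4]` of positions pairs 6 ∣ 36, 8 ∣ 24, 10 ∣ 20 and 14 ∣ 28,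
  -- and matches 4, 12 and 16 with themselves.
  simpa [Fin.prod_univ_seven, Fin.sum_univ_seven] using stmt4_general (R := ℤ)
    (d := ![4, 6, 8, 10, 12, 14, 16]) (e := ![4, 12, 16, 20, 24, 28, 36])
    (by decide) c[1, 6, 2, 4] (by decide)
end

section
/- Let Q_{E8} ∈ ℤ[X] be the quotient of (1−X^4)·(1−X^{16})·(1−X^{24})·(1−X^{28})·(1−X^{36})·(1−X^{40})·(1−X^{48})·(1−X^{60}) by (1−X^4)·(1−X^8)·(1−X^{12})·(1−X^{16})^2·(1−X^{20})·(1−X^{24})·(1−X^{28}). Then the coefficient of X^d in Q_{E8} is 0 for every d in the set {2, 5, 9, 14, 25, 27, 35, 42, 49, 70}. -/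
/-!
Contracting exponents, `∑ aₖ X ^ k ↦ ∑ aₚₖ X ^ k`, is linear over polynomials in `X ^ p`. Hence if
`N` and `D` are polynomials in `X ^ p` and `D` is a non-zero-divisor, then a quotient of `N` by `D`
involves only powers of `X ^ p`: shifting it by a suitable power of `X` moves the exponents of any
other residue class mod `p` to multiples of `p`, and moves all exponents of `N` away from them.
Both products defining `Q_{E8}` are polynomials in `X ^ 4`, and `4` divides no `d` in the list.
-/

open Polynomial

section ExpandContract

variable {R : Type*} [CommSemiring R] {p n : ℕ}

theorem contract_X_pow_eq_zero (hp : p ≠ 0) (hn : ¬ p ∣ n) : contract p (X ^ n : R[X]) = 0 := by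
  ext k
  have hkn : k * p ≠ n := fun h => hn (h ▸ dvd_mul_left p k)
  rw [coeff_contract hp, coeff_X_pow, if_neg hkn, coeff_zero]

theorem contract_X_pow_mul_eq_zero_of_mul_expand_eq_expand {f g q : R[X]} (hp : p ≠ 0)
    (hf : f ∈ nonZeroDivisors R[X]) (h : q * expand R p f = expand R p g) (hn : ¬ p ∣ n) :
    contract p (X ^ n * q) = 0 := by
  refine (mul_right_mem_nonZeroDivisors_eq_zero_iff hf).mp ?_
  calc contract p (X ^ n * q) * f
      = contract p (X ^ n * expand R p g) := by rw [← contract_mul_expand hp, mul_assoc, h]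
    _ = 0 := by rw [contract_mul_expand hp, contract_X_pow_eq_zero hp hn, zero_mul]

theorem coeff_eq_zero_of_mul_expand_eq_expand {f g q : R[X]} (hp : p ≠ 0)
    (hf : f ∈ nonZeroDivisors R[X]) (h : q * expand R p f = expand R p g) (hn : ¬ p ∣ n) :
    q.coeff n = 0 := by
  -- Multiplying by `X ^ (n * (p - 1))` puts `q.coeff n` in degree `n * p`, kept by `contract p`.
  have shift : n * p = n + n * (p - 1) := by
    obtain ⟨k, rfl⟩ := Nat.exists_eq_succ_of_ne_zero hp
    rw [Nat.succ_sub_one, Nat.mul_succ, add_comm]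
  have not_dvd : ¬ p ∣ n * (p - 1) := fun hdvd =>
    hn ((Nat.dvd_add_left hdvd).mp (shift ▸ dvd_mul_left p n))
  calc q.coeff n
      = (contract p (X ^ (n * (p - 1)) * q)).coeff n := by
        rw [coeff_contract hp, shift, coeff_X_pow_mul]
    _ = 0 := by
        rw [contract_X_pow_mul_eq_zero_of_mul_expand_eq_expand hp hf h not_dvd, coeff_zero]

end ExpandContract

theorem stmt10_general {R : Type*} [CommRing R] {Q : R[X]}
    (hQ : ((1 - X ^ 4) * (1 - X ^ 16) * (1 - X ^ 24) * (1 - X ^ 28) * (1 - X ^ 36) *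
        (1 - X ^ 40) * (1 - X ^ 48) * (1 - X ^ 60) : R[X]) =
      (1 - X ^ 4) * (1 - X ^ 8) * (1 - X ^ 12) * (1 - X ^ 16) ^ 2 * (1 - X ^ 20) *
        (1 - X ^ 24) * (1 - X ^ 28) * Q)
    {d : ℕ} (hd : ¬ 4 ∣ d) : Q.coeff d = 0 := by
  let N : R[X] := (1 - X ^ 1) * (1 - X ^ 4) * (1 - X ^ 6) * (1 - X ^ 7) * (1 - X ^ 9) *
    (1 - X ^ 10) * (1 - X ^ 12) * (1 - X ^ 15)
  let D : R[X] := (1 - X ^ 1) * (1 - X ^ 2) * (1 - X ^ 3) * (1 - X ^ 4) ^ 2 * (1 - X ^ 5) *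
    (1 - X ^ 6) * (1 - X ^ 7)
  have hD : D ∈ nonZeroDivisors R[X] := by
    have hD_coeff : D.coeff 0 = 1 := by simp [D, coeff_zero_eq_eval_zero]
    exact mem_nonzeroDivisors_of_coeff_mem 0 (hD_coeff ▸ one_mem _)
  have hQD : Q * expand R 4 D = expand R 4 N := by
    simp only [N, D, map_mul, map_sub, map_pow, map_one, expand_X, ← pow_mul, Nat.reduceMul]
    rw [mul_comm, hQ]
  exact coeff_eq_zero_of_mul_expand_eq_expand four_ne_zero hD hQD hd

theorem stmt10 (Q : ℤ[X])
    (hQ : ((1 - X ^ 4) * (1 - X ^ 16) * (1 - X ^ 24) * (1 - X ^ 28) * (1 - X ^ 36) *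
        (1 - X ^ 40) * (1 - X ^ 48) * (1 - X ^ 60) : ℤ[X]) =
      (1 - X ^ 4) * (1 - X ^ 8) * (1 - X ^ 12) * (1 - X ^ 16) ^ 2 * (1 - X ^ 20) *
        (1 - X ^ 24) * (1 - X ^ 28) * Q) :
    ∀ d ∈ ({2, 5, 9, 14, 25, 27, 35, 42, 49, 70} : Finset ℕ), Q.coeff d = 0 := by
  have not_dvd : ∀ d ∈ ({2, 5, 9, 14, 25, 27, 35, 42, 49, 70} : Finset ℕ), ¬ 4 ∣ d := by decide
  exact fun d hd => stmt10_general hQ (not_dvd d hd)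
end

section
/- Let Q_{E8} ∈ ℤ[X] be the quotient of (1−X^4)·(1−X^{16})·(1−X^{24})·(1−X^{28})·(1−X^{36})·(1−X^{40})·(1−X^{48})·(1−X^{60}) by (1−X^4)·(1−X^8)·(1−X^{12})·(1−X^{16})^2·(1−X^{20})·(1−X^{24})·(1−X^{28}). Then the coefficient of X^d in Q_{E8} is 0 for every d in the set {4, 7, 10, 11, 14, 18, 19, 21, 22, 23, 25, 27, 29, 30, 38}. -/
open Polynomial

/-!
All exponents are multiples of `4`, so `Q` is a polynomial in `Y = X ^ 4`: contract the equation
along `X ^ 4 ↦ Y`, expand it again and cancel the denominator. This settles every degree not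
divisible by `4`. The coefficient of `Y` in `Q` is the difference between the numbers of factors
`1 - Y` in the denominator and in the numerator, and there is one in each.
-/

open scoped nonZeroDivisors

section Expand

variable {R : Type*} [CommRing R]

theorem mem_nonZeroDivisors_of_coeff_zero {p : R[X]} (hp : p.coeff 0 ∈ R⁰) : p ∈ R[X]⁰ := by
  refine Polynomial.mem_nonZeroDivisors_iff.2 fun a ha ↦ (mem_nonZeroDivisors_iff.1 hp).2 a ?_
  simpa only [coeff_smul, smul_eq_mul, coeff_zero] using congrArg (coeff · 0) ha

theorem eq_contract_mul_of_expand_eq_mul_expand {k : ℕ} (hk : k ≠ 0) {f g Q : R[X]}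
    (h : expand R k f = Q * expand R k g) : f = contract k Q * g := by
  rw [← contract_mul_expand hk, ← h, contract_expand k hk]

theorem expand_contract_of_expand_eq_mul_expand {k : ℕ} (hk : k ≠ 0) {f g Q : R[X]}
    (hg : expand R k g ∈ R[X]⁰) (h : expand R k f = Q * expand R k g) :
    expand R k (contract k Q) = Q := by
  refine (mul_cancel_right_mem_nonZeroDivisors hg).1 ?_
  rw [← h, ← map_mul, ← eq_contract_mul_of_expand_eq_mul_expand hk h]

end Expand

section OneSubXPowProd

variable (R : Type*) [CommRing R]

/-- The product of the polynomials `1 - X ^ n`, with `n` running over a multiset of exponents.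
By Hirsch's formula, the Poincaré polynomial of an equal-rank homogeneous space `G / K` is the
quotient of two such products, the exponents being twice the degrees of the basic invariants of
the Weyl groups of `G` and of `K`. An exponent `0` makes the product vanish. -/
noncomputable def oneSubXPowProd (s : Multiset ℕ) : R[X] :=
  (s.map fun n ↦ 1 - X ^ n).prod

variable {R} {k : ℕ} {s t : Multiset ℕ} {Q : R[X]}

theorem oneSubXPowProd_cons (n : ℕ) (s : Multiset ℕ) :
    oneSubXPowProd R (n ::ₘ s) = (1 - X ^ n) * oneSubXPowProd R s := by
  simp only [oneSubXPowProd, Multiset.map_cons, Multiset.prod_cons]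

theorem expand_oneSubXPowProd (k : ℕ) (s : Multiset ℕ) :
    expand R k (oneSubXPowProd R s) = oneSubXPowProd R (s.map (k * ·)) := by
  simp [oneSubXPowProd, map_multiset_prod, pow_mul]

theorem coeff_zero_oneSubXPowProd (hs : 0 ∉ s) : (oneSubXPowProd R s).coeff 0 = 1 := by
  rw [oneSubXPowProd, coeff_zero_multiset_prod, Multiset.map_map]
  refine Multiset.prod_eq_one fun c hc ↦ ?_
  obtain ⟨n, hn, rfl⟩ := Multiset.mem_map.1 hc
  simp [coeff_X_pow, (ne_of_mem_of_not_mem hn hs).symm]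

theorem coeff_one_oneSubXPowProd (hs : 0 ∉ s) :
    (oneSubXPowProd R s).coeff 1 = -(s.count 1 : R) := by
  induction s using Multiset.induction_on with
  | empty => simp [oneSubXPowProd, coeff_one]
  | cons n s ih =>
    obtain ⟨hn, hs⟩ : 0 ≠ n ∧ 0 ∉ s := by simpa only [Multiset.mem_cons, not_or] using hs
    rw [oneSubXPowProd_cons, mul_coeff_one, ih hs, coeff_zero_oneSubXPowProd hs,
      Multiset.count_cons]
    rcases eq_or_ne 1 n with rfl | h
    · simp only [pow_one, coeff_sub, coeff_one, coeff_X_zero, coeff_X_one, one_ne_zero,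
        if_true, if_false]
      push_cast
      ring
    · simp [coeff_X_pow, coeff_one, hn, h]

theorem oneSubXPowProd_mem_nonZeroDivisors (hs : 0 ∉ s) : oneSubXPowProd R s ∈ R[X]⁰ :=
  mem_nonZeroDivisors_of_coeff_zero <| coeff_zero_oneSubXPowProd (R := R) hs ▸ one_mem _

theorem coeff_one_of_oneSubXPowProd_eq_mul (hs : 0 ∉ s) (ht : 0 ∉ t)
    (h : oneSubXPowProd R s = Q * oneSubXPowProd R t) :
    Q.coeff 1 = t.count 1 - s.count 1 := by
  have h₀ : 1 = Q.coeff 0 := by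
    simpa only [coeff_zero_oneSubXPowProd hs, mul_coeff_zero, coeff_zero_oneSubXPowProd ht,
      mul_one] using congrArg (coeff · 0) h
  have h₁ : -(s.count 1 : R) = Q.coeff 0 * -(t.count 1 : R) + Q.coeff 1 * 1 := by
    simpa only [coeff_one_oneSubXPowProd hs, mul_coeff_one, coeff_zero_oneSubXPowProd ht,
      coeff_one_oneSubXPowProd ht] using congrArg (coeff · 1) h
  rw [← h₀] at h₁
  linear_combination -h₁

theorem coeff_eq_zero_of_not_dvd_of_oneSubXPowProd_eq_mul (hk : k ≠ 0) (ht : 0 ∉ t)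
    (h : oneSubXPowProd R (s.map (k * ·)) = Q * oneSubXPowProd R (t.map (k * ·)))
    {d : ℕ} (hd : ¬k ∣ d) : Q.coeff d = 0 := by
  have hkt : 0 ∉ t.map (k * ·) := by simpa [hk] using ht
  have hQ : expand R k (contract k Q) = Q := by
    simp only [← expand_oneSubXPowProd] at h
    refine expand_contract_of_expand_eq_mul_expand hk ?_ h
    exact expand_oneSubXPowProd (R := R) k t ▸ oneSubXPowProd_mem_nonZeroDivisors hkt
  rw [← hQ, coeff_expand hk.bot_lt, if_neg hd]

theorem coeff_of_oneSubXPowProd_eq_mul (hk : k ≠ 0) (hs : 0 ∉ s) (ht : 0 ∉ t)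
    (h : oneSubXPowProd R (s.map (k * ·)) = Q * oneSubXPowProd R (t.map (k * ·))) :
    Q.coeff k = t.count 1 - s.count 1 := by
  simp only [← expand_oneSubXPowProd] at h
  simpa only [coeff_contract hk, one_mul] using
    coeff_one_of_oneSubXPowProd_eq_mul hs ht (eq_contract_mul_of_expand_eq_mul_expand hk h)

end OneSubXPowProd

theorem stmt11_general {R : Type*} [CommRing R] (Q : R[X])
    (hQ : ((1 - X ^ 4) * (1 - X ^ 16) * (1 - X ^ 24) * (1 - X ^ 28) * (1 - X ^ 36) *
        (1 - X ^ 40) * (1 - X ^ 48) * (1 - X ^ 60) : R[X]) =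
      (1 - X ^ 4) * (1 - X ^ 8) * (1 - X ^ 12) * (1 - X ^ 16) ^ 2 * (1 - X ^ 20) *
        (1 - X ^ 24) * (1 - X ^ 28) * Q)
    (d : ℕ) (hd : ¬4 ∣ d ∨ d = 4) : Q.coeff d = 0 := by
  let s : Multiset ℕ := {1, 4, 6, 7, 9, 10, 12, 15}
  let t : Multiset ℕ := {1, 2, 3, 4, 4, 5, 6, 7}
  have h : oneSubXPowProd R (s.map (4 * ·)) = Q * oneSubXPowProd R (t.map (4 * ·)) := by
    rw [mul_comm Q]
    simpa [s, t, oneSubXPowProd, mul_assoc, pow_two] using hQ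
  have hs : 0 ∉ s := by decide
  have ht : 0 ∉ t := by decide
  rcases hd with hd | rfl
  · exact coeff_eq_zero_of_not_dvd_of_oneSubXPowProd_eq_mul four_ne_zero ht h hd
  · have hcount : t.count 1 = s.count 1 := by decide
    rw [coeff_of_oneSubXPowProd_eq_mul four_ne_zero hs ht h, hcount, sub_self]

theorem stmt11 (Q : ℤ[X])
    (hQ : ((1 - X ^ 4) * (1 - X ^ 16) * (1 - X ^ 24) * (1 - X ^ 28) * (1 - X ^ 36) *
        (1 - X ^ 40) * (1 - X ^ 48) * (1 - X ^ 60) : ℤ[X]) =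
      (1 - X ^ 4) * (1 - X ^ 8) * (1 - X ^ 12) * (1 - X ^ 16) ^ 2 * (1 - X ^ 20) *
        (1 - X ^ 24) * (1 - X ^ 28) * Q) :
    ∀ d ∈ ({4, 7, 10, 11, 14, 18, 19, 21, 22, 23, 25, 27, 29, 30, 38} : Finset ℕ), Q.coeff d = 0 :=
  fun d hd ↦ stmt11_general Q hQ d (by decide +revert)
end

section
/- Let Q_{E8} ∈ ℤ[X] be the quotient of (1−X^4)·(1−X^{16})·(1−X^{24})·(1−X^{28})·(1−X^{36})·(1−X^{40})·(1−X^{48})·(1−X^{60}) by (1−X^4)·(1−X^8)·(1−X^{12})·(1−X^{16})^2·(1−X^{20})·(1−X^{24})·(1−X^{28}). Then the coefficient of X^d in Q_{E8} is 0 for every d in the set {6, 9, 10, 11, 13, 14, 15, 17, 18, 21, 22, 29}. -/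
/-!
All exponents involved are multiples of 4, so the numerator and the denominator of `Q` have the form
`f (X ^ 4)` and `g (X ^ 4)`. Discarding the monomials of `Q` whose exponent is not a multiple of 4
is an `R[X ^ 4]`-linear projection `π = expand R 4 ∘ contract 4` of `R[X]` onto `R[X ^ 4]`, so
`g (X ^ 4) * Q = f (X ^ 4)` gives `g (X ^ 4) * π Q = f (X ^ 4) = g (X ^ 4) * Q`. As `g (X ^ 4)` has
constant coefficient 1 it can be cancelled, whence `π Q = Q`.
-/

open Polynomial

section CommSemiring

variable {R : Type*} [CommSemiring R] {n : ℕ}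

theorem expand_contract_eq_self_of_expand_mul_eq_expand (hn : n ≠ 0) {f g q : R[X]}
    (hg : IsLeftRegular (expand R n g)) (h : expand R n g * q = expand R n f) :
    expand R n (contract n q) = q := by
  have contract_mul : g * contract n q = f := calc
    g * contract n q = contract n (expand R n g * q) := by
      rw [mul_comm, mul_comm (expand R n g), contract_mul_expand hn]
    _ = f := by rw [h, contract_expand n hn]
  apply hg
  calc expand R n g * expand R n (contract n q)
      = expand R n f := by rw [← map_mul, contract_mul]
    _ = expand R n g * q := h.symm

theorem coeff_eq_zero_of_expand_mul_eq_expand (hn : n ≠ 0) {f g q : R[X]}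
    (hg : IsLeftRegular (expand R n g)) (h : expand R n g * q = expand R n f)
    {d : ℕ} (hd : ¬ n ∣ d) : q.coeff d = 0 := by
  rw [← expand_contract_eq_self_of_expand_mul_eq_expand hn hg h, coeff_expand hn.bot_lt, if_neg hd]

end CommSemiring

section CommRing

variable {R : Type*} [CommRing R]

open scoped nonZeroDivisors in
theorem isRegular_of_coeff_mem_nonZeroDivisors {f : R[X]} {n : ℕ} (h : f.coeff n ∈ R⁰) :
    IsRegular f :=
  isRegular_iff_mem_nonZeroDivisors.mpr (mem_nonzeroDivisors_of_coeff_mem n h)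

theorem stmt12_general (Q : R[X])
    (hQ : ((1 - X ^ 4) * (1 - X ^ 16) * (1 - X ^ 24) * (1 - X ^ 28) * (1 - X ^ 36) *
        (1 - X ^ 40) * (1 - X ^ 48) * (1 - X ^ 60) : R[X]) =
      (1 - X ^ 4) * (1 - X ^ 8) * (1 - X ^ 12) * (1 - X ^ 16) ^ 2 * (1 - X ^ 20) *
        (1 - X ^ 24) * (1 - X ^ 28) * Q)
    {d : ℕ} (hd : ¬ 4 ∣ d) : Q.coeff d = 0 := by
  let f : R[X] := (1 - X) * (1 - X ^ 4) * (1 - X ^ 6) * (1 - X ^ 7) * (1 - X ^ 9) *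
    (1 - X ^ 10) * (1 - X ^ 12) * (1 - X ^ 15)
  let g : R[X] := (1 - X) * (1 - X ^ 2) * (1 - X ^ 3) * (1 - X ^ 4) ^ 2 * (1 - X ^ 5) *
    (1 - X ^ 6) * (1 - X ^ 7)
  have hfg : expand R 4 g * Q = expand R 4 f := by
    simpa [f, g, ← pow_mul] using hQ.symm
  have coeff_zero : (expand R 4 g).coeff 0 = 1 := by
    simp [g, coeff_zero_eq_eval_zero]
  have hg : IsRegular (expand R 4 g) :=
    isRegular_of_coeff_mem_nonZeroDivisors (coeff_zero ▸ one_mem _)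
  exact coeff_eq_zero_of_expand_mul_eq_expand four_ne_zero hg.left hfg hd

end CommRing

theorem stmt12 (Q : ℤ[X])
    (hQ : ((1 - X ^ 4) * (1 - X ^ 16) * (1 - X ^ 24) * (1 - X ^ 28) * (1 - X ^ 36) *
        (1 - X ^ 40) * (1 - X ^ 48) * (1 - X ^ 60) : ℤ[X]) =
      (1 - X ^ 4) * (1 - X ^ 8) * (1 - X ^ 12) * (1 - X ^ 16) ^ 2 * (1 - X ^ 20) *
        (1 - X ^ 24) * (1 - X ^ 28) * Q) :
    ∀ d ∈ ({6, 9, 10, 11, 13, 14, 15, 17, 18, 21, 22, 29} : Finset ℕ), Q.coeff d = 0 := by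
  have not_dvd : ∀ d ∈ ({6, 9, 10, 11, 13, 14, 15, 17, 18, 21, 22, 29} : Finset ℕ), ¬ 4 ∣ d := by
    decide
  exact fun d hd ↦ stmt12_general Q hQ (not_dvd d hd)
end

section
/- Let S = {2, 5, 6, 8, 9, 12} and D = (1−X^4)·(1−X^8)·(1−X^{12})·(1−X^{16}) ∈ ℤ[X]. For a two-element subset {a,b} ⊆ S with complement {c1,c2,c3,c4}, set N_{a,b} = (1+X^{2a−1})·(1+X^{2b−1})·(1−X^{2c1})·(1−X^{2c2})·(1−X^{2c3})·(1−X^{2c4}). Then D divides N_{a,b} in ℤ[X] if and only if {a,b} = {5,9}. -/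
/-
At a primitive fourth root of unity, `1 - X ^ m` with `m ≠ 0` vanishes exactly when `4 ∣ m`, and
then to order one, while `1 + X ^ k` with `k` odd does not vanish. The denominator therefore
vanishes there to order `4`, and the numerator to order the number of even invariant degrees that
are not left over. As only four of the six degrees are even, divisibility forces every leftover
degree to be odd. Conversely, if `5` and `9` are the only degrees left over, the remaining factors
already contain the denominator, with quotient `(1 - X ^ 24) / (1 - X ^ 8) = 1 + X ^ 8 + X ^ 16`.
-/

open Polynomial
open scoped Finset

section RootOfUnity

variable {R : Type*} [CommRing R] {ζ : R} {n : ℕ}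

theorem one_add_pow_ne_zero_of_odd (hζ : IsPrimitiveRoot ζ n) (hn : 4 ∣ n) {k : ℕ} (hk : Odd k) :
    1 + ζ ^ k ≠ 0 := by
  intro h
  have hpow : ζ ^ (2 * k) = 1 := by
    rw [mul_comm, pow_mul, eq_neg_of_add_eq_zero_right h, neg_one_sq]
  have hdvd : 4 ∣ 2 * k := hn.trans (hζ.dvd_of_pow_eq_one _ hpow)
  grind

theorem one_sub_X_pow_ne_zero {m : ℕ} (hm : (m : R) ≠ 0) : (1 - X ^ m : R[X]) ≠ 0 := by
  intro h
  apply hm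
  simpa [derivative_X_pow] using congrArg (fun p => (derivative p).eval 1) h

variable [IsDomain R]

theorem rootMultiplicity_one_sub_X_pow (hζ : IsPrimitiveRoot ζ n) {m : ℕ} (hm : (m : R) ≠ 0) :
    rootMultiplicity ζ (1 - X ^ m) = if n ∣ m then 1 else 0 := by
  have hroot : (1 - X ^ m : R[X]).IsRoot ζ ↔ n ∣ m := by
    rw [← hζ.pow_eq_one_iff_dvd, IsRoot.def, eval_sub, eval_one, eval_X_pow, sub_eq_zero, eq_comm]
  split_ifs with hnm
  · have hζ0 : ζ ^ (m - 1) ≠ 0 := by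
      intro h0
      have hζm := (hζ.pow_eq_one_iff_dvd m).2 hnm
      have hm0 : m ≠ 0 := by
        rintro rfl
        exact hm Nat.cast_zero
      rw [← pow_sub_one_mul hm0, h0, zero_mul] at hζm
      exact zero_ne_one hζm
    have hderiv : ¬ (derivative (1 - X ^ m : R[X])).IsRoot ζ := by
      simpa [derivative_X_pow, hm] using hζ0
    have h0 := one_sub_X_pow_ne_zero hm
    have hpos := (rootMultiplicity_pos h0).2 (hroot.2 hnm)
    have hle := mt (one_lt_rootMultiplicity_iff_isRoot h0).1 fun h => hderiv h.2
    omega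
  · exact rootMultiplicity_eq_zero (mt hroot.1 hnm)

variable {ι κ μ : Type*} {s : Finset ι} {t : Finset κ} {u : Finset μ}
  {d : ι → ℕ} {e : κ → ℕ} {k : μ → ℕ}

theorem rootMultiplicity_prod {p : ι → R[X]} (hs : ∀ i ∈ s, p i ≠ 0) (x : R) :
    rootMultiplicity x (∏ i ∈ s, p i) = ∑ i ∈ s, rootMultiplicity x (p i) := by
  classical
  simp only [← count_roots, roots_prod _ _ (Finset.prod_ne_zero_iff.2 hs), Multiset.count_bind]
  rfl

theorem rootMultiplicity_prod_one_sub_X_pow (hζ : IsPrimitiveRoot ζ n)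
    (hs : ∀ i ∈ s, (d i : R) ≠ 0) :
    rootMultiplicity ζ (∏ i ∈ s, (1 - X ^ d i)) = #{i ∈ s | n ∣ d i} := by
  rw [rootMultiplicity_prod fun i hi => one_sub_X_pow_ne_zero (hs i hi), Finset.card_filter]
  exact Finset.sum_congr rfl fun i hi => rootMultiplicity_one_sub_X_pow hζ (hs i hi)

theorem card_filter_dvd_le_of_prod_dvd (hζ : IsPrimitiveRoot ζ n) (hn : 4 ∣ n)
    (hs : ∀ i ∈ s, (d i : R) ≠ 0) (ht : ∀ j ∈ t, (e j : R) ≠ 0) (hu : ∀ l ∈ u, Odd (k l))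
    (h : ∏ i ∈ s, (1 - X ^ d i : R[X]) ∣
      (∏ l ∈ u, (1 + X ^ k l)) * ∏ j ∈ t, (1 - X ^ e j)) :
    #{i ∈ s | n ∣ d i} ≤ #{j ∈ t | n ∣ e j} := by
  set P : R[X] := ∏ l ∈ u, (1 + X ^ k l) with hP
  have hroot : ¬ P.IsRoot ζ := by
    simpa [hP, IsRoot, eval_prod, Finset.prod_eq_zero_iff] using
      fun l hl => one_add_pow_ne_zero_of_odd hζ hn (hu l hl)
  have hP0 : P ≠ 0 := by
    intro h0
    simp [h0] at hroot
  have hN0 := mul_ne_zero hP0 <|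
    Finset.prod_ne_zero_iff.2 fun j hj => one_sub_X_pow_ne_zero (ht j hj)
  have hle := rootMultiplicity_le_rootMultiplicity_of_dvd hN0 h ζ
  rwa [rootMultiplicity_mul hN0, rootMultiplicity_eq_zero hroot, zero_add,
    rootMultiplicity_prod_one_sub_X_pow hζ hs, rootMultiplicity_prod_one_sub_X_pow hζ ht] at hle

end RootOfUnity

theorem card_filter_even_le_of_prod_dvd {s t u : Finset ℕ}
    (hs : 0 ∉ s) (ht : 0 ∉ t) (hu : 0 ∉ u)
    (h : ∏ q ∈ s, (1 - X ^ (2 * q) : ℤ[X]) ∣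
      (∏ a ∈ u, (1 + X ^ (2 * a - 1))) * ∏ c ∈ t, (1 - X ^ (2 * c))) :
    #{q ∈ s | Even q} ≤ #{c ∈ t | Even c} := by
  have hcast {v : Finset ℕ} (hv : 0 ∉ v) : ∀ m ∈ v, ((2 * m : ℕ) : ℂ) ≠ 0 := by
    intro m hm
    exact_mod_cast mul_ne_zero two_ne_zero (ne_of_mem_of_not_mem hm hv)
  have hodd : ∀ a ∈ u, Odd (2 * a - 1) := by
    intro a ha
    have ha0 : a ≠ 0 := ne_of_mem_of_not_mem ha hu
    grind
  have hmap := map_dvd (mapRingHom (Int.castRingHom ℂ)) h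
  simp only [map_mul, map_prod, map_add, map_sub, map_pow, map_one, coe_mapRingHom, map_X] at hmap
  have hfour (m : ℕ) : 4 ∣ 2 * m ↔ Even m := by grind
  simpa only [hfour] using
    card_filter_dvd_le_of_prod_dvd Complex.isPrimitiveRoot_I dvd_rfl (hcast hs) (hcast ht) hodd hmap

theorem odd_of_mem_of_prod_dvd {s S A : Finset ℕ} (hs : 0 ∉ s) (hS : 0 ∉ S) (hA : A ⊆ S)
    (hcard : #{c ∈ S | Even c} ≤ #{q ∈ s | Even q})
    (h : ∏ q ∈ s, (1 - X ^ (2 * q) : ℤ[X]) ∣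
      (∏ a ∈ A, (1 + X ^ (2 * a - 1))) * ∏ c ∈ S \ A, (1 - X ^ (2 * c)))
    {a : ℕ} (ha : a ∈ A) : Odd a := by
  have hle : #{q ∈ s | Even q} ≤ #{c ∈ S \ A | Even c} :=
    card_filter_even_le_of_prod_dvd hs (by simp [hS]) (fun h0 => hS (hA h0)) h
  have heq : {c ∈ S \ A | Even c} = {c ∈ S | Even c} :=
    Finset.eq_of_subset_of_card_le
      (Finset.filter_subset_filter _ Finset.sdiff_subset) (hcard.trans hle)
  by_contra hodd
  have hmem : a ∈ {c ∈ S \ A | Even c} := by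
    rw [heq]
    exact Finset.mem_filter.2 ⟨hA ha, Nat.not_odd_iff_even.1 hodd⟩
  exact (Finset.mem_sdiff.1 (Finset.mem_filter.1 hmem).1).2 ha

theorem stmt13_general {A : Finset ℕ} (hA : A ⊆ {2, 5, 6, 8, 9, 12}) :
    ((1 - X ^ 4) * (1 - X ^ 8) * (1 - X ^ 12) * (1 - X ^ 16) : ℤ[X]) ∣
        (∏ a ∈ A, (1 + X ^ (2 * a - 1))) *
          ∏ c ∈ ({2, 5, 6, 8, 9, 12} : Finset ℕ) \ A, (1 - X ^ (2 * c)) ↔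
      A ⊆ {5, 9} := by
  constructor
  · intro h a ha
    have hden : ((1 - X ^ 4) * (1 - X ^ 8) * (1 - X ^ 12) * (1 - X ^ 16) : ℤ[X]) =
        ∏ q ∈ ({2, 4, 6, 8} : Finset ℕ), (1 - X ^ (2 * q)) := by
      simp [mul_assoc]
    have hodd : Odd a :=
      odd_of_mem_of_prod_dvd (by decide) (by decide) hA (by decide) (hden ▸ h) ha
    have hmem := hA ha
    simp only [Finset.mem_insert, Finset.mem_singleton] at hmem ⊢
    grind
  · intro h
    have hsub : ({2, 6, 8, 12} : Finset ℕ) ⊆ {2, 5, 6, 8, 9, 12} \ A :=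
      Finset.subset_sdiff.2 ⟨by decide, (by decide : Disjoint _ {5, 9}).mono_right h⟩
    have hfactor : ∏ c ∈ ({2, 6, 8, 12} : Finset ℕ), (1 - X ^ (2 * c) : ℤ[X]) =
        (1 - X ^ 4) * (1 - X ^ 8) * (1 - X ^ 12) * (1 - X ^ 16) * (1 + X ^ 8 + X ^ 16) := by
      simp only [Finset.prod_insert, Finset.mem_insert, Finset.mem_singleton, Finset.prod_singleton,
        Nat.reduceEqDiff, or_self, not_false_eq_true, Nat.reduceMul]
      ring
    have hdvd := Finset.prod_dvd_prod_of_subset _ _ (fun c => (1 - X ^ (2 * c) : ℤ[X])) hsub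
    exact ((Dvd.intro _ hfactor.symm).trans hdvd).mul_left _

theorem stmt13 :
    ∀ a ∈ ({2, 5, 6, 8, 9, 12} : Finset ℕ), ∀ b ∈ ({2, 5, 6, 8, 9, 12} : Finset ℕ),
      a ≠ b →
        ((((1 - X ^ 4) * (1 - X ^ 8) * (1 - X ^ 12) * (1 - X ^ 16) : ℤ[X]) ∣
            (1 + X ^ (2 * a - 1)) * (1 + X ^ (2 * b - 1)) *
              ∏ c ∈ ({2, 5, 6, 8, 9, 12} : Finset ℕ) \ {a, b}, (1 - X ^ (2 * c))) ↔
          ({a, b} : Finset ℕ) = {5, 9}) := by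
  intro a ha b hb hab
  rw [← Finset.prod_pair (f := fun c => (1 + X ^ (2 * c - 1) : ℤ[X])) hab,
    stmt13_general (Finset.insert_subset ha (by simpa using hb))]
  exact Finset.subset_iff_eq_of_card_le (by rw [Finset.card_pair hab]; rfl)
end
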